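/- arXiv:2407.11152 — 5 statements merged into one kernel-verified Lean document; each statement's English description precedes it below -/
import Mathlib

section
/- If M is an 8×8 real orthogonal matrix all of whose entries are dyadic rationals, then the product M ⬝ H₂ has at least one entry that is not a dyadic rational (so M ⬝ H₂ is not an element of O(8,𝔻)). -/
/-!
If every entry of `M * H2mat` were dyadic, then `Mᵀ * (M * H2mat)` would be a product of two
matrices with rational entries. By orthogonality this product is `H2mat`, whose `(0, 0)` entry
is the irrational number `1 / √2`.
-/

/-!
Statement 8: if M is an 8×8 real orthogonal matrix with dyadic entries, then M ⬝ H₂ has at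
least one non-dyadic entry (so M ⬝ H₂ ∉ O(8,𝔻)).
-/

open Matrix

/-- Basis index: a bit string `x₀x₁x₂`. -/
abbrev B3 : Type := Fin 3 → Fin 2

/-- A real number is a dyadic rational if it is of the form `a / 2 ^ k`. -/
def IsDyadicR (r : ℝ) : Prop := ∃ (a : ℤ) (k : ℕ), r = (a : ℝ) / 2 ^ k

/-- The gate `H₂ = I₂ ⊗ I₂ ⊗ H`, applying the Hadamard gate to qubit `2` alone. -/
noncomputable def H2mat : Matrix B3 B3 ℝ :=
  Matrix.of fun x y =>
    if x 0 = y 0 ∧ x 1 = y 1 then (-1) ^ ((x 2).val * (y 2).val) / Real.sqrt 2 else 0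

theorem IsDyadicR.exists_rat {r : ℝ} (h : IsDyadicR r) : ∃ q : ℚ, r = q := by
  obtain ⟨a, k, rfl⟩ := h
  exact ⟨a / 2 ^ k, by push_cast; rfl⟩

/-- If `M` is a real orthogonal 8×8 matrix all of whose entries are
dyadic rationals, then `M ⬝ H₂` has at least one non-dyadic entry. -/
theorem mul_H2_not_dyadic (M : Matrix B3 B3 ℝ) (horth : Mᵀ * M = 1)
    (hdyadic : ∀ i j, IsDyadicR (M i j)) :
    ∃ i j, ¬ IsDyadicR ((M * H2mat) i j) := by
  by_contra! hN
  -- Entry `(0, 0)` of `Mᵀ * (M * H2mat) = H2mat` is `1 / √2`.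
  have hent : ∑ i, M i 0 * (M * H2mat) i 0 = 1 / Real.sqrt 2 := by
    have h : (Mᵀ * (M * H2mat)) 0 0 = H2mat 0 0 := by
      rw [← Matrix.mul_assoc, horth, Matrix.one_mul]
    simpa [Matrix.mul_apply (M := Mᵀ), H2mat] using h
  choose p hp using fun i => (hdyadic i 0).exists_rat
  choose q hq using fun i => (hN i 0).exists_rat
  have hirr : Irrational (1 / Real.sqrt 2) := by
    rw [one_div]
    exact irrational_sqrt_two.inv
  refine hirr ⟨∑ i, p i * q i, ?_⟩
  rw [← hent]
  push_cast
  exact Finset.sum_congr rfl fun i _ => by rw [hp, hq]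
end

section
/- Every element of the subgroup of GL(8,ℝ) generated by O(8,𝔻) together with H₂ can be written as N ⬝ H₂^ℓ for some N ∈ O(8,𝔻) and some ℓ ∈ {0,1}; that is, O(8,𝔻) has index at most two in the 3-qubit Toffoli–Hadamard group generated by O(8,𝔻) and H₂. -/
/-!
Write `H₂ = K / √2` with `K` an integer matrix, symmetric, with `K * K = 2`. The proof tracks the
orthogonal matrices `M` such that either `M` or `√2 • M` has dyadic entries. They contain the
generators, since `√2 • H₂ = K`. They are closed under products, because
`(√2 • M) * (√2 • N) = 2 • (M * N)` and `1/2` is dyadic, and under inverses, because `M⁻¹ = Mᵀ`.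
If `M` itself is dyadic take `ℓ = 0`. If `√2 • M` is dyadic, then so is
`M * H₂ = (1/2) • (√2 • M) * K`, and `M = (M * H₂) * H₂` gives `ℓ = 1`.
-/

/-!
Statement 9: every element of the subgroup of GL(8,ℝ) generated by O(8,𝔻) together with H₂
can be written as N ⬝ H₂^ℓ with N ∈ O(8,𝔻) and ℓ ∈ {0,1}.
-/

open Matrix

/-- Membership in `O(8,𝔻)`: real orthogonal with dyadic rational entries. -/
def InO8DR (M : Matrix B3 B3 ℝ) : Prop := Mᵀ * M = 1 ∧ ∀ i j, IsDyadicR (M i j)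

/-- `O(8,𝔻)` as a set of elements of `GL(8,ℝ)`. -/
def O8DunitsR : Set (Matrix B3 B3 ℝ)ˣ := {M | InO8DR (M : Matrix B3 B3 ℝ)}

/-- The dyadic rationals as a subring of `ℝ`. -/
def dyadicSubring : Subring ℝ where
  carrier := {r | IsDyadicR r}
  zero_mem' := ⟨0, 0, by simp⟩
  one_mem' := ⟨1, 0, by simp⟩
  add_mem' := by
    rintro _ _ ⟨a, k, rfl⟩ ⟨b, l, rfl⟩
    exact ⟨a * 2 ^ l + b * 2 ^ k, k + l, by push_cast; field_simp; ring⟩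
  mul_mem' := by
    rintro _ _ ⟨a, k, rfl⟩ ⟨b, l, rfl⟩
    exact ⟨a * b, k + l, by push_cast; field_simp; ring⟩
  neg_mem' := by
    rintro _ ⟨a, k, rfl⟩
    exact ⟨-a, k, by push_cast; ring⟩

/-- All entries of the matrix are dyadic rationals. -/
def DyadicEntries (M : Matrix B3 B3 ℝ) : Prop := ∀ i j, M i j ∈ dyadicSubring

lemma half_mem : (1 / 2 : ℝ) ∈ dyadicSubring := ⟨1, 1, by norm_num⟩

lemma DyadicEntries.mul {M N : Matrix B3 B3 ℝ} (hM : DyadicEntries M) (hN : DyadicEntries N) :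
    DyadicEntries (M * N) := fun i j => by
  rw [Matrix.mul_apply]
  exact dyadicSubring.sum_mem fun k _ => dyadicSubring.mul_mem (hM i k) (hN k j)

lemma DyadicEntries.half {M : Matrix B3 B3 ℝ} (hM : DyadicEntries M) :
    DyadicEntries ((1 / 2 : ℝ) • M) := fun i j => dyadicSubring.mul_mem half_mem (hM i j)

/-- The integer matrix `K = √2 • H₂`. -/
def hadamardInt : Matrix B3 B3 ℤ :=
  Matrix.of fun x y => if x 0 = y 0 ∧ x 1 = y 1 then (-1) ^ ((x 2).val * (y 2).val) else 0

lemma hadamardInt_mul_self : hadamardInt * hadamardInt = (2 : ℤ) • 1 := by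
  decide +kernel

lemma sqrt_two_smul_H2mat : √2 • H2mat = hadamardInt.map (Int.castRingHom ℝ) := by
  ext x y
  simp only [H2mat, hadamardInt, Matrix.smul_apply, Matrix.of_apply, Matrix.map_apply,
    smul_eq_mul]
  split_ifs
  · simp only [map_pow, map_neg, map_one]
    field_simp
  · simp

lemma dyadicEntries_sqrt_two_smul_H2mat : DyadicEntries (√2 • H2mat) := fun i j => by
  rw [sqrt_two_smul_H2mat]
  exact intCast_mem dyadicSubring _

lemma mul_eq_half (A B : Matrix B3 B3 ℝ) : A * B = (1 / 2 : ℝ) • ((√2 • A) * (√2 • B)) := by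
  rw [Matrix.smul_mul, Matrix.mul_smul, smul_smul, smul_smul, mul_assoc,
    Real.mul_self_sqrt (by norm_num : (0 : ℝ) ≤ 2)]
  norm_num

lemma H2mat_mul_self : H2mat * H2mat = 1 := by
  rw [mul_eq_half, sqrt_two_smul_H2mat, ← Matrix.map_mul, hadamardInt_mul_self]
  ext i j
  simp only [Matrix.smul_apply, Matrix.map_apply, Matrix.one_apply]
  split_ifs <;> norm_num

lemma H2mat_transpose : H2matᵀ = H2mat := by
  ext x y
  simp only [H2mat, Matrix.transpose_apply, Matrix.of_apply, eq_comm (a := y 0),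
    eq_comm (a := y 1), mul_comm (y 2).val]

/-- Orthogonal matrices with entries in `𝔻` or all in `(1/√2) 𝔻`. -/
def OrthDyadicUpToSqrtTwo (M : Matrix B3 B3 ℝ) : Prop :=
  Mᵀ * M = 1 ∧ (DyadicEntries M ∨ DyadicEntries (√2 • M))

lemma OrthDyadicUpToSqrtTwo.mul {M N : Matrix B3 B3 ℝ} (hM : OrthDyadicUpToSqrtTwo M)
    (hN : OrthDyadicUpToSqrtTwo N) : OrthDyadicUpToSqrtTwo (M * N) := by
  obtain ⟨oM, hM⟩ := hM
  obtain ⟨oN, hN⟩ := hN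
  refine ⟨?_, ?_⟩
  · rw [Matrix.transpose_mul, Matrix.mul_assoc, ← Matrix.mul_assoc Mᵀ, oM, Matrix.one_mul, oN]
  · rcases hM with hM | hM <;> rcases hN with hN | hN
    · exact .inl (hM.mul hN)
    · exact .inr (by rw [← Matrix.mul_smul]; exact hM.mul hN)
    · exact .inr (by rw [← Matrix.smul_mul]; exact hM.mul hN)
    · exact .inl (by rw [mul_eq_half]; exact (hM.mul hN).half)

lemma OrthDyadicUpToSqrtTwo.transpose {M : Matrix B3 B3 ℝ} (hM : OrthDyadicUpToSqrtTwo M) :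
    OrthDyadicUpToSqrtTwo Mᵀ :=
  ⟨by rw [Matrix.transpose_transpose]; exact mul_eq_one_comm.mp hM.1,
    hM.2.imp (fun h i j => h j i) (fun h i j => h j i)⟩

lemma orthDyadicUpToSqrtTwo_H2mat : OrthDyadicUpToSqrtTwo H2mat :=
  ⟨by rw [H2mat_transpose, H2mat_mul_self], .inr dyadicEntries_sqrt_two_smul_H2mat⟩

lemma orthDyadicUpToSqrtTwo_of_mem_closure {M : (Matrix B3 B3 ℝ)ˣ}
    (hM : M ∈ Subgroup.closure
      (O8DunitsR ∪ {u : (Matrix B3 B3 ℝ)ˣ | (u : Matrix B3 B3 ℝ) = H2mat})) :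
    OrthDyadicUpToSqrtTwo (M : Matrix B3 B3 ℝ) := by
  induction hM using Subgroup.closure_induction with
  | mem u hu =>
    rcases hu with hu | hu
    · exact ⟨hu.1, .inl hu.2⟩
    · rw [show (u : Matrix B3 B3 ℝ) = H2mat from hu]
      exact orthDyadicUpToSqrtTwo_H2mat
  | one =>
    refine ⟨by simp, .inl fun i j => ?_⟩
    rw [Units.val_one, Matrix.one_apply]
    split_ifs
    exacts [dyadicSubring.one_mem, dyadicSubring.zero_mem]
  | mul u v _ _ hu hv => exact hu.mul hv
  | inv u _ hu =>
    rw [← Units.eq_inv_of_mul_eq_one_right hu.1]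
    exact hu.transpose


/-- Every element of the subgroup of `GL(8,ℝ)` generated by `O(8,𝔻)`
together with `H₂` can be written as `N ⬝ H₂^ℓ` with `N ∈ O(8,𝔻)` and `ℓ ∈ {0,1}`:
`O(8,𝔻)` has index at most two in the 3-qubit Toffoli–Hadamard group. -/
theorem mem_closure_O8D_H2 (M : (Matrix B3 B3 ℝ)ˣ)
    (hM : M ∈ Subgroup.closure
      (O8DunitsR ∪ {u : (Matrix B3 B3 ℝ)ˣ | (u : Matrix B3 B3 ℝ) = H2mat})) :
    ∃ (N : (Matrix B3 B3 ℝ)ˣ) (ℓ : ℕ), N ∈ O8DunitsR ∧ ℓ ≤ 1 ∧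
      (M : Matrix B3 B3 ℝ) = (N : Matrix B3 B3 ℝ) * H2mat ^ ℓ := by
  obtain ⟨oM, hM | hM⟩ := orthDyadicUpToSqrtTwo_of_mem_closure hM
  · exact ⟨M, 0, ⟨oM, hM⟩, by simp, by simp⟩
  · let U : (Matrix B3 B3 ℝ)ˣ := ⟨H2mat, H2mat, H2mat_mul_self, H2mat_mul_self⟩
    have hMU : ((M * U : (Matrix B3 B3 ℝ)ˣ) : Matrix B3 B3 ℝ) = M * H2mat := rfl
    refine ⟨M * U, 1, ⟨?_, ?_⟩, le_rfl, ?_⟩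
    · rw [hMU]
      exact (OrthDyadicUpToSqrtTwo.mul ⟨oM, .inr hM⟩ orthDyadicUpToSqrtTwo_H2mat).1
    · rw [hMU, mul_eq_half]
      exact (hM.mul dyadicEntries_sqrt_two_smul_H2mat).half
    · rw [hMU, pow_one, Matrix.mul_assoc, H2mat_mul_self, Matrix.mul_one]
end

section
/- Let Σ ⊆ Σ̂ be alphabets with Π = Σ̂ \ Σ finite, let R be a set of pairs of words over Σ, and let D be a family of Σ̂-defining relations for Π whose derived generator graph is acyclic. Then the monoid presented by ⟨Σ ∣ R⟩ is isomorphic to the monoid presented by ⟨Σ̂ ∣ R ∪ D⟩, where R is regarded as a set of pairs of words over Σ̂ via the inclusion of free monoids. -/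
/-!
Acyclicity of the derived generator graph on the finite set `Sᶜ` makes the relation "the letter `y`
occurs in `w x`" well-founded. Substituting `w x` for `x` therefore terminates, and yields an
*expansion* homomorphism `e : FreeMonoid α →* FreeMonoid S` which fixes the letters of `S` and
satisfies `e x = e (w x)` for `x ∈ Sᶜ` (`exists_expansion`). The inclusion of free monoids and `e`
both respect the defining relations, so they descend to homomorphisms between the presented monoids.
One composite is the identity because `e` fixes `S`; the other because, by well-founded induction,
every letter is congruent to its expansion.
-/

/-- Two homomorphisms agreeing on the letters that occur in `u` agree on `u`. -/
theorem FreeMonoid.hom_congr_of_letters {α M : Type*} [Monoid M] (f g : FreeMonoid α →* M)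
    (u : FreeMonoid α)
    (h : ∀ a ∈ FreeMonoid.toList u, f (FreeMonoid.of a) = g (FreeMonoid.of a)) : f u = g u := by
  induction u using FreeMonoid.inductionOn' with
  | one => simp
  | of_mul a u ih =>
    rw [map_mul, map_mul, h a (by simp), ih fun b hb => h b (by simp [hb])]

/-- An acyclic derived generator graph on a finite set of new letters is well-founded in the
direction from a letter to the letters of its defining word. -/
theorem wellFounded_occurs {α : Type} (S : Set α) (hfin : (Sᶜ : Set α).Finite)
    (w : (Sᶜ : Set α) → FreeMonoid α)
    (hacyclic : ∀ x : (Sᶜ : Set α),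
      ¬ Relation.TransGen
          (fun a b : (Sᶜ : Set α) => (b : α) ∈ FreeMonoid.toList (w a)) x x) :
    WellFounded fun b a : (Sᶜ : Set α) => (b : α) ∈ FreeMonoid.toList (w a) := by
  have : Finite (Sᶜ : Set α) := hfin
  let r : (Sᶜ : Set α) → (Sᶜ : Set α) → Prop := fun b a => (b : α) ∈ FreeMonoid.toList (w a)
  have : Std.Irrefl (Relation.TransGen r) :=
    ⟨fun x hx => hacyclic x (Relation.transGen_swap.1 hx)⟩
  have hwf : WellFounded (Relation.TransGen r) := Finite.wellFounded_of_trans_of_irrefl _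
  exact Subrelation.wf (fun h => Relation.TransGen.single h) hwf

open Classical in
/-- The expansion homomorphism: replacing new letters by their defining words, recursively, until
only letters of `S` remain. -/
theorem exists_expansion {α : Type} (S : Set α) (w : (Sᶜ : Set α) → FreeMonoid α)
    (hwf : WellFounded fun b a : (Sᶜ : Set α) => (b : α) ∈ FreeMonoid.toList (w a)) :
    ∃ e : FreeMonoid α →* FreeMonoid S,
      (∀ s : S, e (FreeMonoid.of (s : α)) = FreeMonoid.of s) ∧
      ∀ x : (Sᶜ : Set α), e (FreeMonoid.of (x : α)) = e (w x) := by
  -- The value `1` is never used below: only letters occurring in `w x` matter.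
  let F : (x : (Sᶜ : Set α)) →
      ((y : (Sᶜ : Set α)) → (y : α) ∈ FreeMonoid.toList (w x) → FreeMonoid S) → FreeMonoid S :=
    fun x rec => FreeMonoid.lift (fun a =>
      if h : a ∈ S then FreeMonoid.of ⟨a, h⟩
      else if hr : a ∈ FreeMonoid.toList (w x) then rec ⟨a, h⟩ hr else 1) (w x)
  let g : (Sᶜ : Set α) → FreeMonoid S := hwf.fix F
  have hg : ∀ x, g x = F x fun y _ => g y := fun x => hwf.fix_eq F x
  refine ⟨FreeMonoid.lift fun a => if h : a ∈ S then FreeMonoid.of ⟨a, h⟩ else g ⟨a, h⟩, ?_, ?_⟩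
  · intro s
    simp
  · intro x
    have hx : (x : α) ∉ S := x.2
    rw [FreeMonoid.lift_eval_of, dif_neg hx, hg]
    apply FreeMonoid.hom_congr_of_letters
    intro a ha
    simp [ha]

/-- Let `S ⊆ α` be an alphabet inside the alphabet `α`, with complement
`Π = Sᶜ` finite, let `R` be a set of pairs of words over `S`, and let the family of
`α`-defining relations `{(x, w x) | x ∈ Sᶜ}` have an acyclic derived generator graph.
Then `⟨S ∣ R⟩` and `⟨α ∣ R ∪ D⟩` present isomorphic monoids. -/
theorem presentation_add_derived_generators {α : Type} (S : Set α)
    (hfin : (Sᶜ : Set α).Finite)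
    (R : Set (FreeMonoid ↥S × FreeMonoid ↥S))
    (w : (Sᶜ : Set α) → FreeMonoid α)
    (hacyclic : ∀ x : (Sᶜ : Set α),
      ¬ Relation.TransGen
          (fun a b : (Sᶜ : Set α) => (b : α) ∈ FreeMonoid.toList (w a)) x x) :
    Nonempty
      ((conGen fun u v : FreeMonoid ↥S => (u, v) ∈ R).Quotient ≃*
        (conGen fun u v : FreeMonoid α =>
            (∃ p ∈ R, u = FreeMonoid.map (Subtype.val : ↥S → α) p.1 ∧
                v = FreeMonoid.map (Subtype.val : ↥S → α) p.2) ∨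
              ∃ x : (Sᶜ : Set α), u = FreeMonoid.of (x : α) ∧ v = w x).Quotient) := by
  obtain ⟨e, heS, hew⟩ := exists_expansion S w (wellFounded_occurs S hfin w hacyclic)
  let c := conGen fun u v : FreeMonoid ↥S => (u, v) ∈ R
  let d := conGen fun u v : FreeMonoid α =>
            (∃ p ∈ R, u = FreeMonoid.map (Subtype.val : ↥S → α) p.1 ∧
                v = FreeMonoid.map (Subtype.val : ↥S → α) p.2) ∨
              ∃ x : (Sᶜ : Set α), u = FreeMonoid.of (x : α) ∧ v = w x
  let i : FreeMonoid ↥S →* FreeMonoid α := FreeMonoid.map Subtype.val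
  have hei : ∀ u, e (i u) = u := by
    have : e.comp i = MonoidHom.id _ := FreeMonoid.hom_eq fun s => by simp [i, heS]
    exact DFunLike.congr_fun this
  have hφ : c ≤ Con.ker (d.mk'.comp i) := by
    refine Con.conGen_le.2 fun u v huv => ?_
    exact (Con.eq d).2 (ConGen.Rel.of _ _ (Or.inl ⟨(u, v), huv, rfl, rfl⟩))
  have hψ : d ≤ Con.ker (c.mk'.comp e) := by
    refine Con.conGen_le.2 ?_
    rintro u v (⟨p, hp, rfl, rfl⟩ | ⟨x, rfl, rfl⟩)
    · change c.mk' (e (i p.1)) = c.mk' (e (i p.2))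
      rw [hei, hei]
      exact (Con.eq c).2 (ConGen.Rel.of _ _ hp)
    · exact congrArg c.mk' (hew x)
  have hnew : ∀ x : (Sᶜ : Set α),
      d.mk' (i (e (FreeMonoid.of (x : α)))) = d.mk' (FreeMonoid.of (x : α)) := by
    intro x
    induction x using (wellFounded_occurs S hfin w hacyclic).induction with
    | _ x ih =>
    have hx : d.mk' (FreeMonoid.of (x : α)) = d.mk' (w x) :=
      (Con.eq d).2 (ConGen.Rel.of _ _ (Or.inr ⟨x, rfl, rfl⟩))
    rw [hew, hx]
    refine FreeMonoid.hom_congr_of_letters ((d.mk'.comp i).comp e) d.mk' (w x) fun a ha => ?_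
    by_cases h : a ∈ S
    · exact congrArg d.mk' ((congrArg i (heS ⟨a, h⟩)).trans (FreeMonoid.map_of _ _))
    · exact ih ⟨a, h⟩ ha
  have hie : ∀ u, d.mk' (i (e u)) = d.mk' u := fun u => by
    refine FreeMonoid.hom_congr_of_letters ((d.mk'.comp i).comp e) d.mk' u fun a _ => ?_
    by_cases h : a ∈ S
    · exact congrArg d.mk' ((congrArg i (heS ⟨a, h⟩)).trans (FreeMonoid.map_of _ _))
    · exact hnew ⟨a, h⟩
  refine ⟨MonoidHom.toMulEquiv (c.lift (d.mk'.comp i) hφ) (d.lift (c.mk'.comp e) hψ) ?_ ?_⟩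
  · refine MonoidHom.ext fun q => Con.induction_on q fun u => ?_
    exact congrArg c.mk' (hei u)
  · refine MonoidHom.ext fun q => Con.induction_on q fun u => ?_
    exact hie u
end

section
/- Fix n ≥ 1. For every word v over the alphabet 𝒯ₙ there exists a word u, all of whose letters are adjacent symbols of the form X_{a,a+1}, such that v ∼_{R_τ} u. -/
/-!
Statement 17: modulo R_τ, every word over 𝒯ₙ is equivalent to a word in the adjacent
transposition symbols X_{a,a+1}.
-/

/-!
The letter `X_{a,b}` with `a + 1 < b` is equivalent to `X_{a,a+1} · X_{a+1,b} · X_{a,a+1}`: insert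
the square `X_{a,a+1} · X_{a,a+1} ≈ ε` on the left and move one of its factors past `X_{a,b}`
by the second relation. Induction on `b - a` therefore handles single letters
(`letter_rewrites`), and compatibility of the congruence with products handles words.
-/

/-- The alphabet `𝒯ₙ` of symbols `X_{a,b}` with `0 ≤ a < b < n`. -/
abbrev Tn (n : ℕ) : Type := {p : ℕ × ℕ // p.1 < p.2 ∧ p.2 < n}

/-- `X_{a,b}` is an adjacent transposition symbol, i.e. `b = a + 1`. -/
def IsAdj {n : ℕ} (x : Tn n) : Prop := x.1.2 = x.1.1 + 1

/-- The relations `R_τ`: `X_{a,a+1}·X_{a,a+1} ≈ ε` and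
`X_{a,a+1}·X_{a,b} ≈ X_{a+1,b}·X_{a,a+1}` for `a + 1 < b`. -/
def Rtau (n : ℕ) : Set (FreeMonoid (Tn n) × FreeMonoid (Tn n)) :=
  {r | (∃ x : Tn n, IsAdj x ∧ r = (FreeMonoid.of x * FreeMonoid.of x, 1)) ∨
       (∃ x y z : Tn n, IsAdj x ∧ y.1.1 = x.1.1 ∧ x.1.2 < y.1.2 ∧
          z.1.1 = x.1.2 ∧ z.1.2 = y.1.2 ∧
          r = (FreeMonoid.of x * FreeMonoid.of y, FreeMonoid.of z * FreeMonoid.of x))}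

/-- The case of a one-letter word `X_{a,b}`, by induction on `d = b - a - 1`. -/
theorem letter_rewrites (n : ℕ) (d : ℕ) : ∀ y : Tn n, y.1.2 = y.1.1 + 1 + d →
    ∃ u : FreeMonoid (Tn n), (∀ x ∈ FreeMonoid.toList u, IsAdj x) ∧
      (conGen fun a b : FreeMonoid (Tn n) => (a, b) ∈ Rtau n) (FreeMonoid.of y) u := by
  induction d with
  | zero =>
    intro y hy
    refine ⟨FreeMonoid.of y, ?_, Con.refl _ _⟩
    intro x hx
    rw [FreeMonoid.toList_of, List.mem_singleton] at hx
    subst hx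
    exact hy
  | succ d ih =>
    intro y hy
    have hyn := y.2.2
    let x : Tn n := ⟨(y.1.1, y.1.1 + 1), by simp, by simp only; omega⟩
    let z : Tn n := ⟨(y.1.1 + 1, y.1.2), by simp only; omega, hyn⟩
    have hx : IsAdj x := rfl
    obtain ⟨w, hw, hzw⟩ := ih z (by simp only [z]; omega)
    refine ⟨FreeMonoid.of x * w * FreeMonoid.of x, ?_, ?_⟩
    · intro t ht
      simp only [FreeMonoid.toList_mul, FreeMonoid.toList_of, List.mem_append,
        List.mem_singleton] at ht
      rcases ht with (rfl | ht) | rfl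
      · exact hx
      · exact hw t ht
      · exact hx
    · set c := conGen fun a b : FreeMonoid (Tn n) => (a, b) ∈ Rtau n
      have hsq : c (FreeMonoid.of x * FreeMonoid.of x) 1 :=
        ConGen.Rel.of _ _ (Or.inl ⟨x, hx, rfl⟩)
      have hcomm : c (FreeMonoid.of x * FreeMonoid.of y) (FreeMonoid.of z * FreeMonoid.of x) :=
        ConGen.Rel.of _ _ (Or.inr ⟨x, y, z, hx, rfl, by simp only [x]; omega, rfl, rfl, rfl⟩)
      have h1 : c (FreeMonoid.of y) (FreeMonoid.of x * (FreeMonoid.of x * FreeMonoid.of y)) := by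
        have h := c.symm (c.mul hsq (c.refl (FreeMonoid.of y)))
        rwa [one_mul, mul_assoc] at h
      have h2 := c.mul (c.refl (FreeMonoid.of x)) hcomm
      have h3 := c.mul (c.refl (FreeMonoid.of x)) (c.mul hzw (c.refl (FreeMonoid.of x)))
      rw [mul_assoc]
      exact c.trans h1 (c.trans h2 h3)

/-- For `n ≥ 1`, every word `v` over `𝒯ₙ` is `∼_{R_τ}`-equivalent to a
word `u` all of whose letters are adjacent transposition symbols `X_{a,a+1}`. -/
theorem word_rewrites_to_adjacent_transpositions (n : ℕ) (hn : 1 ≤ n)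
    (v : FreeMonoid (Tn n)) :
    ∃ u : FreeMonoid (Tn n), (∀ x ∈ FreeMonoid.toList u, IsAdj x) ∧
      (conGen fun a b : FreeMonoid (Tn n) => (a, b) ∈ Rtau n) v u := by
  induction v using FreeMonoid.inductionOn' with
  | one => exact ⟨1, by simp, Con.refl _ _⟩
  | of_mul y v ih =>
    obtain ⟨u, hu, hvu⟩ := ih
    obtain ⟨w, hw, hyw⟩ := letter_rewrites n (y.1.2 - y.1.1 - 1) y (by have := y.2.1; omega)
    refine ⟨w * u, ?_, Con.mul _ hyw hvu⟩
    intro t ht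
    rw [FreeMonoid.toList_mul, List.mem_append] at ht
    exact ht.elim (hw t) (hu t)
end

section
/- Fix n ≥ 1. For a word u = u₁u₂⋯u_m over the alphabet 𝒯ₙ, let ū = u_m⋯u₂u₁ denote its reversal. Then u·ū ∼_{R_B} ε and ū·u ∼_{R_B} ε; moreover, if u and v are words over 𝒯ₙ with u ∼_{R_B} v, then ū ∼_{R_B} v̄. -/
/-- The relations `R_B`: `R_τ` together with the braiding relations
`X_{a+1,a+2}·X_{a,a+1} ≈ X_{a,a+2}·X_{a+1,a+2}`. -/
def RB (n : ℕ) : Set (FreeMonoid (Tn n) × FreeMonoid (Tn n)) :=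
  Rtau n ∪
    {r | ∃ x y z : Tn n, IsAdj x ∧ IsAdj y ∧ y.1.2 = x.1.1 ∧
          z.1.1 = y.1.1 ∧ z.1.2 = x.1.2 ∧
          r = (FreeMonoid.of x * FreeMonoid.of y, FreeMonoid.of z * FreeMonoid.of x)}

/-- The reversal `ū` of a word `u = u₁u₂⋯u_m`, namely `u_m⋯u₂u₁`. -/
def wordReverse {n : ℕ} (u : FreeMonoid (Tn n)) : FreeMonoid (Tn n) :=
  FreeMonoid.ofList (FreeMonoid.toList u).reverse

/-- Each letter squares to the identity in the quotient by `∼_{R_B}`, by induction on `k`, a bound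
on `b - a - 1`. -/
theorem RB_letter_sq {n : ℕ} (k : ℕ) (y : Tn n) (hk : y.1.2 ≤ y.1.1 + 1 + k) :
    ((FreeMonoid.of y : FreeMonoid (Tn n)) :
        (conGen fun a b : FreeMonoid (Tn n) => (a, b) ∈ RB n).Quotient) *
      (FreeMonoid.of y : FreeMonoid (Tn n)) = 1 := by
  have adj : ∀ x : Tn n, IsAdj x → ((FreeMonoid.of x : FreeMonoid (Tn n)) :
        (conGen fun a b : FreeMonoid (Tn n) => (a, b) ∈ RB n).Quotient) *
      (FreeMonoid.of x : FreeMonoid (Tn n)) = 1 := fun x hx =>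
    (Con.eq _).2 (ConGen.Rel.of _ _ (Or.inl (Or.inl ⟨x, hx, rfl⟩)))
  induction k generalizing y with
  | zero => exact adj y (by have := y.2.1; unfold IsAdj; omega)
  | succ k ih =>
    obtain ⟨⟨a, b⟩, hab, hb⟩ := y
    simp only at hab hb hk
    rcases Nat.lt_or_ge (a + 1) b with h | h
    · let x : Tn n := ⟨(a, a + 1), by simp, by simp only; omega⟩
      let y : Tn n := ⟨(a, b), hab, hb⟩
      let z : Tn n := ⟨(a + 1, b), h, hb⟩
      have hx := adj x rfl
      have hz := ih z (by simp only [z]; omega)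
      have hr : ((FreeMonoid.of x * FreeMonoid.of y : FreeMonoid (Tn n)) :
          (conGen fun a b : FreeMonoid (Tn n) => (a, b) ∈ RB n).Quotient) =
          (FreeMonoid.of z * FreeMonoid.of x : FreeMonoid (Tn n)) :=
        (Con.eq _).2 (ConGen.Rel.of _ _
          (Or.inl (Or.inr ⟨x, y, z, rfl, rfl, h, rfl, rfl, rfl⟩)))
      rw [Con.coe_mul, Con.coe_mul] at hr
      change ((FreeMonoid.of y : FreeMonoid (Tn n)) :
        (conGen fun a b : FreeMonoid (Tn n) => (a, b) ∈ RB n).Quotient) *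
        (FreeMonoid.of y : FreeMonoid (Tn n)) = 1
      generalize ((FreeMonoid.of x : FreeMonoid (Tn n)) :
        (conGen fun a b : FreeMonoid (Tn n) => (a, b) ∈ RB n).Quotient) = X at *
      generalize ((FreeMonoid.of y : FreeMonoid (Tn n)) :
        (conGen fun a b : FreeMonoid (Tn n) => (a, b) ∈ RB n).Quotient) = Y at *
      generalize ((FreeMonoid.of z : FreeMonoid (Tn n)) :
        (conGen fun a b : FreeMonoid (Tn n) => (a, b) ∈ RB n).Quotient) = Z at *
      have hY : Y = X * (Z * X) := by rw [← hr, ← mul_assoc, hx, one_mul]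
      calc Y * Y = X * Z * (X * X) * Z * X := by rw [hY]; simp only [mul_assoc]
        _ = X * (Z * Z) * X := by rw [hx, mul_one]; simp only [mul_assoc]
        _ = 1 := by rw [hz, mul_one, hx]
    · exact adj _ (by unfold IsAdj; simp only; omega)

theorem wordReverse_wordReverse {n : ℕ} (u : FreeMonoid (Tn n)) :
    wordReverse (wordReverse u) = u := by
  simp [wordReverse]

theorem wordReverse_of_mul {n : ℕ} (x : Tn n) (u : FreeMonoid (Tn n)) :
    wordReverse (FreeMonoid.of x * u) = wordReverse u * FreeMonoid.of x := by
  simp [wordReverse]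

theorem RB_mul_wordReverse {n : ℕ} (u : FreeMonoid (Tn n)) :
    (u : (conGen fun a b : FreeMonoid (Tn n) => (a, b) ∈ RB n).Quotient) *
      (wordReverse u : FreeMonoid (Tn n)) = 1 := by
  induction u using FreeMonoid.inductionOn' with
  | one => exact mul_one 1
  | of_mul x u ih =>
    rw [wordReverse_of_mul, Con.coe_mul, Con.coe_mul, ← mul_assoc,
      mul_assoc (Con.toQuotient (FreeMonoid.of x)), ih, mul_one]
    exact RB_letter_sq x.1.2 x (by omega)

theorem RB_wordReverse_mul {n : ℕ} (u : FreeMonoid (Tn n)) :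
    ((wordReverse u : FreeMonoid (Tn n)) :
      (conGen fun a b : FreeMonoid (Tn n) => (a, b) ∈ RB n).Quotient) * u = 1 := by
  simpa only [wordReverse_wordReverse] using RB_mul_wordReverse (wordReverse u)

/-- For `n ≥ 1`: `u·ū ∼_{R_B} ε` and `ū·u ∼_{R_B} ε` for every word `u`
over `𝒯ₙ`; moreover if `u ∼_{R_B} v` then `ū ∼_{R_B} v̄`. -/
theorem word_reverse_formal_inverse (n : ℕ) (hn : 1 ≤ n) :
    (∀ u : FreeMonoid (Tn n),
        (conGen fun a b : FreeMonoid (Tn n) => (a, b) ∈ RB n) (u * wordReverse u) 1 ∧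
        (conGen fun a b : FreeMonoid (Tn n) => (a, b) ∈ RB n) (wordReverse u * u) 1) ∧
      ∀ u v : FreeMonoid (Tn n),
        (conGen fun a b : FreeMonoid (Tn n) => (a, b) ∈ RB n) u v →
          (conGen fun a b : FreeMonoid (Tn n) => (a, b) ∈ RB n)
            (wordReverse u) (wordReverse v) := by
  refine ⟨fun u => ⟨(Con.eq _).1 (RB_mul_wordReverse u), (Con.eq _).1 (RB_wordReverse_mul u)⟩,
    fun u v huv => (Con.eq _).1 ?_⟩
  -- `ū` and `v̄` are a left and a right inverse of the common class of `u` and `v`.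
  have h := RB_wordReverse_mul u
  rw [(Con.eq _).2 huv] at h
  exact left_inv_eq_right_inv h (RB_mul_wordReverse v)
end
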